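/- arXiv:2311.03209 — 2 statements merged into one kernel-verified Lean document; each statement's English description precedes it below -/
import Mathlib

section
/- For every N ≥ 0, c > 0 and 0 ≤ b < 3 there exists a constant C = C(N,c,b) such that for every symmetric positive definite real 3×3 matrix G = (g^{ab}), every Z ≥ 1 and every p ∈ ℝ³, one has √(det G) · ∫_{ℝ³} (q⁰)^N h^{−b} exp(−c Z (q⁰ − 1)) dq ≤ C Z^{−3/2 + b/2} (p⁰)^{−b/2}. The constant C is independent of G, Z and p. -/
open Matrix Real MeasureTheory

noncomputable section

/-- 3×3 real matrices. -/
abbrev Mat3 := Matrix (Fin 3) (Fin 3) ℝ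
/-- Momentum vectors in ℝ³. -/
abbrev V3 := Fin 3 → ℝ

/-- The quadratic form `g^{ab} p_a p_b = pᵀ G p`. -/
def quadG (G : Mat3) (p : V3) : ℝ := p ⬝ᵥ G *ᵥ p

/-- The particle energy `p⁰ = √(1 + g^{ab} p_a p_b)`. -/
def p0 (G : Mat3) (p : V3) : ℝ := Real.sqrt (1 + quadG G p)

/-- The relative momentum `h`. -/
def hrel (G : Mat3) (p q : V3) : ℝ :=
  Real.sqrt (-(p0 G p - p0 G q) ^ 2 + quadG G (p - q))

open scoped MatrixOrder Matrix.Norms.L2Operator in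
/-- A positive definite real matrix factors as `Aᵀ * A` with `A` invertible. -/
lemma Matrix.PosDef.exists_eq_transpose_mul_self {G : Mat3} (hG : G.PosDef) :
    ∃ A : Mat3, A.det ≠ 0 ∧ G = Aᵀ * A := by
  obtain ⟨A, hA⟩ := CStarAlgebra.nonneg_iff_eq_star_mul_self.mp hG.posSemidef.nonneg
  have hA' : G = Aᵀ * A := by
    rw [hA, Matrix.star_eq_conjTranspose, Matrix.conjTranspose_eq_transpose_of_trivial]
  refine ⟨A, fun h => hG.det_pos.ne' ?_, hA'⟩
  rw [hA', Matrix.det_mul, h, mul_zero]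

lemma quadG_transpose_mul_self (A : Mat3) (q : V3) :
    quadG (Aᵀ * A) q = (A *ᵥ q) ⬝ᵥ (A *ᵥ q) := by
  rw [quadG, ← Matrix.mulVec_mulVec, Matrix.dotProduct_mulVec, Matrix.vecMul_transpose]

/-- The square of the sup norm is bounded by the square of the Euclidean norm. -/
lemma sq_norm_le_dotProduct_self (u : V3) : ‖u‖ ^ 2 ≤ u ⬝ᵥ u := by
  have h0 : 0 ≤ u ⬝ᵥ u := Finset.sum_nonneg fun j _ => mul_self_nonneg (u j)
  refine (Real.le_sqrt (norm_nonneg u) h0).1 ((pi_norm_le_iff_of_nonneg (Real.sqrt_nonneg _)).2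
    fun i => Real.le_sqrt_of_sq_le ?_)
  rw [Real.norm_eq_abs, sq_abs, sq]
  exact Finset.single_le_sum (f := fun j => u j * u j)
    (fun j _ => mul_self_nonneg (u j)) (Finset.mem_univ i)

lemma dotProduct_sq_le (u v : V3) : (u ⬝ᵥ v) ^ 2 ≤ (u ⬝ᵥ u) * (v ⬝ᵥ v) := by
  have h := Finset.sum_mul_sq_le_sq_mul_sq Finset.univ u v
  simpa only [dotProduct, sq] using h

/-- With `P = √(1+U)` and `Q = √(1+V)`, the squared relative momentum is at least
the squared distance divided by `P * Q`. -/
lemma sqDist_le_energy_mul_relSq {U V s P Q : ℝ} (hs : s ^ 2 ≤ U * V)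
    (hP : 1 ≤ P) (hQ : 1 ≤ Q) (hPU : P ^ 2 = 1 + U) (hQV : Q ^ 2 = 1 + V)
    (hd : 0 ≤ U + V - 2 * s) :
    U + V - 2 * s ≤ P * Q * (-(P - Q) ^ 2 + (U + V - 2 * s)) := by
  have hPQ : 1 ≤ P * Q := one_le_mul_of_one_le_of_one_le hP hQ
  have hsq : (1 + s) ^ 2 ≤ (P * Q) ^ 2 := by
    rw [mul_pow, hPU, hQV]; nlinarith
  have h1 : 1 + s ≤ P * Q := (le_abs_self _).trans (abs_le_of_sq_le_sq hsq (by linarith))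
  have h2 : U + V - 2 * s ≤ (P * Q - 1 - s) * (P * Q + 1 + s) := by
    have : (P * Q) ^ 2 = (1 + U) * (1 + V) := by rw [mul_pow, hPU, hQV]
    nlinarith
  have h3 : -(P - Q) ^ 2 + (U + V - 2 * s) = 2 * (P * Q - 1 - s) := by nlinarith
  rw [h3]
  nlinarith [mul_nonneg (sub_nonneg.2 h1) (sub_nonneg.2 h1)]

/-- The singular kernel `‖y‖ ^ (-b)` cut off to the unit ball. -/
def cutoffKernel (b : ℝ) (y : V3) : ℝ :=
  (Metric.ball (0 : V3) 1).indicator (fun y => ‖y‖ ^ (-b)) y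

lemma cutoffKernel_nonneg (b : ℝ) (y : V3) : 0 ≤ cutoffKernel b y :=
  Set.indicator_nonneg (fun _ _ => by positivity) y

lemma integrable_cutoffKernel {b : ℝ} (hb : b < 3) : Integrable (cutoffKernel b) := by
  refine (integrable_indicator_iff measurableSet_ball).2 ?_
  refine integrableOn_ball_of_norm_le_rpow (C := 1) (α := b) (by simp) (by simpa using hb) ?_ ?_
  · filter_upwards with x
    rw [Real.norm_of_nonneg (by positivity), one_mul]
  · exact (measurable_norm.pow_const _).aestronglyMeasurable

lemma rpow_one_add_inv_sq_le {b : ℝ} (hb : 0 ≤ b) {y : V3} (hy : y ≠ 0) :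
    (1 + 1 / ‖y‖ ^ 2) ^ (b / 2) ≤ 2 ^ (b / 2) * (1 + cutoffKernel b y) := by
  have hy0 : 0 < ‖y‖ := norm_pos_iff.2 hy
  by_cases h : ‖y‖ < 1
  · have e : cutoffKernel b y = ‖y‖ ^ (-b) := Set.indicator_of_mem (by simpa using h) _
    have h1 : 1 + 1 / ‖y‖ ^ 2 ≤ 2 * (1 / ‖y‖ ^ 2) := by
      have : 1 ≤ 1 / ‖y‖ ^ 2 := by rw [le_div_iff₀ (by positivity)]; nlinarith
      linarith
    have h2 : (1 / ‖y‖ ^ 2) ^ (b / 2) = ‖y‖ ^ (-b) := by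
      rw [one_div, ← Real.rpow_natCast, ← Real.rpow_neg hy0.le, ← Real.rpow_mul hy0.le]
      congr 1; push_cast; ring
    calc _ ≤ (2 * (1 / ‖y‖ ^ 2)) ^ (b / 2) := by gcongr
      _ = 2 ^ (b / 2) * ‖y‖ ^ (-b) := by rw [Real.mul_rpow (by norm_num) (by positivity), h2]
      _ ≤ _ := by rw [e]; gcongr; linarith
  · have h1 : 1 + 1 / ‖y‖ ^ 2 ≤ 2 := by
      have : 1 / ‖y‖ ^ 2 ≤ 1 := by
        rw [div_le_one (by positivity)]; nlinarith
      linarith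
    calc _ ≤ (2 : ℝ) ^ (b / 2) := by gcongr
      _ ≤ _ := le_mul_of_one_le_right (by positivity)
        (by linarith [cutoffKernel_nonneg b y])

/-- Polynomial growth times exponential decay in the energy is dominated by a Japanese bracket,
uniformly in the decay parameter `Z ≥ 1`. -/
lemma exists_rpow_mul_exp_le_bracket (M c : ℝ) (hM : 0 ≤ M) (hc : 0 < c) :
    ∃ K > (0 : ℝ), ∀ Z Q t : ℝ, 1 ≤ Z → 1 ≤ Q → 0 ≤ t → t ^ 2 ≤ Z * (Q ^ 2 - 1) →
      Q ^ M * Real.exp (-(c * Z * (Q - 1))) ≤ K * (1 + t) ^ (-(4 : ℝ)) := by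
  obtain ⟨n, hn⟩ := exists_nat_ge (M + 4)
  refine ⟨n.factorial / c ^ n * Real.exp (2 * c), by positivity, fun Z Q t hZ hQ ht h => ?_⟩
  set s := Z * (Q - 1) with hs
  have hs0 : 0 ≤ s := mul_nonneg (by linarith) (by linarith)
  have hQs : Q ≤ 2 + s := by nlinarith
  have hts : 1 + t ≤ 2 + s := by
    have : t ^ 2 ≤ (1 + s) ^ 2 := by
      have : Z * (Q ^ 2 - 1) = s * (Q + 1) := by rw [hs]; ring
      have : Q - 1 ≤ s := le_mul_of_one_le_left (by linarith) hZ
      nlinarith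
    linarith [(le_abs_self t).trans (abs_le_of_sq_le_sq this (by linarith))]
  have hexp : (2 + s) ^ n ≤ n.factorial / c ^ n * Real.exp (2 * c) * Real.exp (c * s) := by
    have := Real.pow_div_factorial_le_exp (x := c * (2 + s)) (by positivity) n
    rw [div_le_iff₀ (by positivity), mul_pow, mul_add, Real.exp_add] at this
    rw [div_mul_eq_mul_div, div_mul_eq_mul_div, le_div_iff₀ (by positivity)]
    rw [mul_comm c 2] at this
    linarith
  have hpow : Q ^ M * (1 + t) ^ (4 : ℝ) ≤ (2 + s) ^ n := by
    calc Q ^ M * (1 + t) ^ (4 : ℝ) ≤ (2 + s) ^ M * (2 + s) ^ (4 : ℝ) := by gcongr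
      _ = (2 + s) ^ (M + 4) := (Real.rpow_add (by linarith) _ _).symm
      _ ≤ (2 + s) ^ (n : ℝ) := Real.rpow_le_rpow_of_exponent_le (by linarith) hn
      _ = _ := Real.rpow_natCast _ _
  rw [Real.rpow_neg (by positivity), ← div_eq_mul_inv, le_div_iff₀ (by positivity),
    show c * Z * (Q - 1) = c * s by rw [hs]; ring, Real.exp_neg, mul_right_comm,
    ← div_eq_mul_inv, div_le_iff₀ (Real.exp_pos _)]
  exact hpow.trans hexp

/-- Change of variables for an integrable function composed with an invertible matrix. -/
lemma integrable_integral_comp_mulVec {B : Mat3} (hB : B.det ≠ 0) {F : V3 → ℝ}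
    (hF : Integrable F) :
    Integrable (fun q => F (B *ᵥ q)) ∧ ∫ q, F (B *ᵥ q) = |B.det|⁻¹ * ∫ x, F x := by
  have hm := Real.map_matrix_volume_pi_eq_smul_volume_pi hB
  have hmeas : AEMeasurable (Matrix.toLin' B) (volume : Measure V3) :=
    (LinearMap.continuous_of_finiteDimensional (Matrix.toLin' B)).aemeasurable
  have hF' : Integrable F (Measure.map (Matrix.toLin' B) volume) := by
    rw [hm]; exact hF.smul_measure ENNReal.ofReal_ne_top
  refine ⟨hF'.comp_aemeasurable hmeas, ?_⟩
  have := integral_map hmeas hF'.aestronglyMeasurable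
  rw [hm, integral_smul_measure, ENNReal.toReal_ofReal (abs_nonneg _), abs_inv] at this
  exact this.symm

/-- The pointwise bound on `h ^ (-b)`, where `h² ≥ d / (P * Q)` and `P² ≤ 2 Q² (1 + d)`. -/
lemma rpow_neg_relMomentum_le {b P Q d r : ℝ} (hb : 0 ≤ b) (hP : 1 ≤ P) (hQ : 1 ≤ Q)
    (hd : 0 < d) (hr : d ≤ P * Q * r) (hPQ : P ^ 2 ≤ 2 * Q ^ 2 * (1 + d)) :
    Real.sqrt r ^ (-b) ≤ P ^ (-(b / 2)) * (2 ^ (b / 2) * Q ^ (3 * (b / 2)) *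
      (1 + 1 / d) ^ (b / 2)) := by
  have hr0 : 0 < r := by
    by_contra hr0
    nlinarith [mul_nonneg (mul_nonneg (zero_le_one.trans hP) (zero_le_one.trans hQ))
      (sub_nonneg.2 (not_lt.1 hr0))]
  have hinv : r⁻¹ ≤ P⁻¹ * (2 * Q ^ 3 * (1 + 1 / d)) := by
    have e : P⁻¹ * (2 * Q ^ 3 * (1 + 1 / d)) = (2 * Q ^ 2 * (1 + d)) * Q / (P * d) := by
      field_simp
      ring
    rw [e, inv_eq_one_div, div_le_div_iff₀ hr0 (by positivity), one_mul]
    calc P * d ≤ P * (P * Q * r) := by gcongr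
      _ = P ^ 2 * Q * r := by ring
      _ ≤ _ := by gcongr
  have e1 : Real.sqrt r ^ (-b) = r⁻¹ ^ (b / 2) := by
    rw [Real.sqrt_eq_rpow, ← Real.rpow_mul hr0.le, Real.inv_rpow hr0.le, ← Real.rpow_neg hr0.le]
    congr 1; ring
  have e2 : P ^ (-(b / 2)) * (2 ^ (b / 2) * Q ^ (3 * (b / 2)) * (1 + 1 / d) ^ (b / 2))
      = (P⁻¹ * (2 * Q ^ 3 * (1 + 1 / d))) ^ (b / 2) := by
    rw [Real.mul_rpow (by positivity) (by positivity), Real.mul_rpow (by positivity) (by positivity),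
      Real.mul_rpow (by positivity) (by positivity), Real.inv_rpow (by positivity),
      Real.rpow_neg (by positivity), Real.rpow_mul (by positivity)]
    norm_cast
  rw [e1, e2]
  gcongr

/-- The pointwise bound of the integrand by a translation-invariant profile in the rescaled
variable `√Z • A q`. -/
lemma integrand_le_profile {N c b K : ℝ} (hb : 0 ≤ b)
    (hK : 0 < K) (hbound : ∀ Z Q t : ℝ, 1 ≤ Z → 1 ≤ Q → 0 ≤ t → t ^ 2 ≤ Z * (Q ^ 2 - 1) →
      Q ^ (N + 3 * (b / 2)) * Real.exp (-(c * Z * (Q - 1))) ≤ K * (1 + t) ^ (-(4 : ℝ)))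
    {A : Mat3} (hA : A.det ≠ 0) {Z : ℝ} (hZ : 1 ≤ Z) {p q : V3} (hpq : q ≠ p) :
    p0 (Aᵀ * A) q ^ N * hrel (Aᵀ * A) p q ^ (-b) *
        Real.exp (-(c * Z * (p0 (Aᵀ * A) q - 1))) ≤
      2 ^ b * K * Z ^ (b / 2) * p0 (Aᵀ * A) p ^ (-(b / 2)) *
        ((1 + ‖(Real.sqrt Z • A) *ᵥ q‖) ^ (-(4 : ℝ)) +
          cutoffKernel b ((Real.sqrt Z • A) *ᵥ q - (Real.sqrt Z • A) *ᵥ p)) := by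
  have hZ0 : 0 < Z := by linarith
  have hnn : ∀ w : V3, 0 ≤ w ⬝ᵥ w := fun w => (sq_nonneg _).trans (sq_norm_le_dotProduct_self w)
  have hnorm : ∀ w : V3, ‖(Real.sqrt Z • A) *ᵥ w‖ ^ 2 ≤ Z * ((A *ᵥ w) ⬝ᵥ (A *ᵥ w)) := by
    intro w
    rw [Matrix.smul_mulVec, norm_smul, mul_pow, Real.norm_of_nonneg (Real.sqrt_nonneg _),
      Real.sq_sqrt hZ0.le]
    gcongr
    exact sq_norm_le_dotProduct_self _
  set P := p0 (Aᵀ * A) p with hPdef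
  set Q := p0 (Aᵀ * A) q with hQdef
  set y := (Real.sqrt Z • A) *ᵥ q - (Real.sqrt Z • A) *ᵥ p with hy
  set t := ‖(Real.sqrt Z • A) *ᵥ q‖ with ht
  set u := A *ᵥ p with hu
  set v := A *ᵥ q with hv
  have hPsq : P ^ 2 = 1 + u ⬝ᵥ u := by
    rw [hPdef, p0, quadG_transpose_mul_self, Real.sq_sqrt (by linarith [hnn u])]
  have hQsq : Q ^ 2 = 1 + v ⬝ᵥ v := by
    rw [hQdef, p0, quadG_transpose_mul_self, Real.sq_sqrt (by linarith [hnn v])]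
  have hP : 1 ≤ P := by
    rw [hPdef, p0, quadG_transpose_mul_self]; exact Real.one_le_sqrt.2 (by linarith [hnn u])
  have hQ : 1 ≤ Q := by
    rw [hQdef, p0, quadG_transpose_mul_self]; exact Real.one_le_sqrt.2 (by linarith [hnn v])
  set d := (u - v) ⬝ᵥ (u - v) with hd
  have hd_eq : d = u ⬝ᵥ u + v ⬝ᵥ v - 2 * (u ⬝ᵥ v) := by
    rw [hd, sub_dotProduct, dotProduct_sub, dotProduct_sub, dotProduct_comm v u]; ring
  have hyd : ‖y‖ ^ 2 ≤ Z * d := by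
    have := hnorm (q - p)
    rw [Matrix.mulVec_sub, Matrix.mulVec_sub, ← neg_sub (A *ᵥ p), neg_dotProduct_neg] at this
    exact this
  have hy0 : y ≠ 0 := by
    have hdet : (Real.sqrt Z • A).det ≠ 0 := by
      rw [Matrix.det_smul]
      exact mul_ne_zero (pow_ne_zero _ (Real.sqrt_pos.2 hZ0).ne') hA
    rw [hy, ← Matrix.mulVec_sub]
    exact fun h => hpq (sub_eq_zero.1 (Matrix.eq_zero_of_mulVec_eq_zero hdet h))
  have hyn : 0 < ‖y‖ := norm_pos_iff.2 hy0
  have hd0 : 0 < d := by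
    have : 0 < ‖y‖ ^ 2 := by positivity
    by_contra h
    nlinarith
  have hr : d ≤ P * Q * (-(P - Q) ^ 2 + d) := by
    rw [hd_eq]
    exact sqDist_le_energy_mul_relSq (dotProduct_sq_le u v) hP hQ hPsq hQsq (hd_eq ▸ hd0.le)
  have hPQ : P ^ 2 ≤ 2 * Q ^ 2 * (1 + d) := by
    have h2 := hnn ((2 : ℝ) • v - u)
    have e : ((2 : ℝ) • v - u) ⬝ᵥ ((2 : ℝ) • v - u)
        = 4 * (v ⬝ᵥ v) - 4 * (u ⬝ᵥ v) + u ⬝ᵥ u := by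
      simp only [sub_dotProduct, dotProduct_sub, smul_dotProduct, dotProduct_smul, smul_eq_mul,
        dotProduct_comm v u]
      ring
    rw [hPsq, hQsq]
    nlinarith [mul_nonneg (hnn v) hd0.le]
  have hh : hrel (Aᵀ * A) p q = Real.sqrt (-(P - Q) ^ 2 + d) := by
    rw [hrel, quadG_transpose_mul_self, Matrix.mulVec_sub]
  have hkernel : (1 + 1 / d) ^ (b / 2) ≤
      Z ^ (b / 2) * (2 ^ (b / 2) * (1 + cutoffKernel b y)) := by
    have h1 : 1 + 1 / d ≤ Z * (1 + 1 / ‖y‖ ^ 2) := by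
      have : 1 / d ≤ Z * (1 / ‖y‖ ^ 2) := by
        rw [mul_one_div, div_le_div_iff₀ hd0 (by positivity)]; linarith
      linarith
    calc _ ≤ (Z * (1 + 1 / ‖y‖ ^ 2)) ^ (b / 2) := by gcongr
      _ = Z ^ (b / 2) * (1 + 1 / ‖y‖ ^ 2) ^ (b / 2) :=
        Real.mul_rpow hZ0.le (by positivity)
      _ ≤ _ := by gcongr; exact rpow_one_add_inv_sq_le hb hy0
  have hE := hbound Z Q t hZ hQ (norm_nonneg _) (by
    rw [hQsq, add_sub_cancel_left]; exact hnorm q)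
  have hw : (1 + t) ^ (-(4 : ℝ)) ≤ 1 :=
    Real.rpow_le_one_of_one_le_of_nonpos (by linarith [norm_nonneg ((Real.sqrt Z • A) *ᵥ q)])
      (by norm_num)
  have hH := cutoffKernel_nonneg b y
  have h22 : (2 : ℝ) ^ (b / 2) * 2 ^ (b / 2) = 2 ^ b := by
    rw [← Real.rpow_add (by norm_num)]; congr 1; ring
  rw [hh]
  calc Q ^ N * Real.sqrt (-(P - Q) ^ 2 + d) ^ (-b) * Real.exp (-(c * Z * (Q - 1)))
      ≤ Q ^ N * (P ^ (-(b / 2)) * (2 ^ (b / 2) * Q ^ (3 * (b / 2)) *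
          (Z ^ (b / 2) * (2 ^ (b / 2) * (1 + cutoffKernel b y))))) *
          Real.exp (-(c * Z * (Q - 1))) := by
        gcongr
        refine (rpow_neg_relMomentum_le hb hP hQ hd0 hr hPQ).trans ?_
        gcongr
    _ = 2 ^ b * Z ^ (b / 2) * P ^ (-(b / 2)) * (1 + cutoffKernel b y) *
          (Q ^ (N + 3 * (b / 2)) * Real.exp (-(c * Z * (Q - 1)))) := by
        rw [← h22, Real.rpow_add (by linarith)]; ring
    _ ≤ 2 ^ b * Z ^ (b / 2) * P ^ (-(b / 2)) * (1 + cutoffKernel b y) *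
          (K * (1 + t) ^ (-(4 : ℝ))) := by gcongr
    _ = 2 ^ b * K * Z ^ (b / 2) * P ^ (-(b / 2)) *
          ((1 + t) ^ (-(4 : ℝ)) + (1 + t) ^ (-(4 : ℝ)) * cutoffKernel b y) := by ring
    _ ≤ _ := by
        gcongr
        exact mul_le_of_le_one_left hH hw

/-- for every `N ≥ 0`, `c > 0` and `0 ≤ b < 3` there is a constant `C`,
independent of the metric `G`, of `Z ≥ 1` and of `p`, such that
`√(det G) ∫ (q⁰)^N h^{−b} e^{−cZ(q⁰−1)} dq ≤ C Z^{−3/2+b/2} (p⁰)^{−b/2}`.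
(Here `√(det G) = (det g)^{−1/2}` where `(g_{ab}) = G⁻¹`.) -/
theorem stmt6 (N c b : ℝ) (hN : 0 ≤ N) (hc : 0 < c) (hb0 : 0 ≤ b) (hb3 : b < 3) :
    ∃ C > (0 : ℝ), ∀ (G : Mat3), G.PosDef → ∀ Z : ℝ, 1 ≤ Z → ∀ p : V3,
      Real.sqrt G.det *
        ∫ q : V3, p0 G q ^ N * hrel G p q ^ (-b) * Real.exp (-(c * Z * (p0 G q - 1)))
      ≤ C * Z ^ (-(3 : ℝ) / 2 + b / 2) * p0 G p ^ (-(b / 2)) := by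
  obtain ⟨K, hK, hbound⟩ := exists_rpow_mul_exp_le_bracket (N + 3 * (b / 2)) c (by positivity) hc
  have hw : Integrable (fun x : V3 => (1 + ‖x‖) ^ (-(4 : ℝ))) :=
    integrable_one_add_norm (by simp; norm_num)
  have hker := integrable_cutoffKernel hb3
  set I := (∫ x : V3, (1 + ‖x‖) ^ (-(4 : ℝ))) + ∫ x : V3, cutoffKernel b x with hI
  have hI0 : 0 ≤ I := add_nonneg (integral_nonneg fun x => by positivity)
    (integral_nonneg fun x => cutoffKernel_nonneg b x)
  refine ⟨2 ^ b * K * (I + 1), by positivity, fun G hG Z hZ p => ?_⟩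
  obtain ⟨A, hA, rfl⟩ := hG.exists_eq_transpose_mul_self
  have hZ0 : 0 < Z := by linarith
  set B : Mat3 := Real.sqrt Z • A with hBdef
  have hBdet : B.det = Real.sqrt Z ^ 3 * A.det := by simp [hBdef]
  have hB : B.det ≠ 0 := by
    rw [hBdet]; exact mul_ne_zero (pow_ne_zero _ (Real.sqrt_pos.2 hZ0).ne') hA
  have hsqrt : Real.sqrt (Aᵀ * A).det = |A.det| := by
    rw [Matrix.det_mul, Matrix.det_transpose, Real.sqrt_mul_self_eq_abs]
  have hker' : Integrable fun x : V3 => cutoffKernel b (x - B *ᵥ p) := hker.comp_sub_right _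
  obtain ⟨hFB, heq⟩ := integrable_integral_comp_mulVec hB (hw.add hker')
  have hF : ∫ x : V3, ((fun x : V3 => (1 + ‖x‖) ^ (-(4 : ℝ))) +
      fun x : V3 => cutoffKernel b (x - B *ᵥ p)) x = I := by
    simp only [Pi.add_apply]
    rw [integral_add hw hker', integral_sub_right_eq_self (fun x => cutoffKernel b x)]
  rw [hF] at heq
  have hP0 : 0 ≤ p0 (Aᵀ * A) p := Real.sqrt_nonneg _
  have hle : ∫ q : V3, p0 (Aᵀ * A) q ^ N * hrel (Aᵀ * A) p q ^ (-b) *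
      Real.exp (-(c * Z * (p0 (Aᵀ * A) q - 1))) ≤
      2 ^ b * K * Z ^ (b / 2) * p0 (Aᵀ * A) p ^ (-(b / 2)) * (|B.det|⁻¹ * I) := by
    rw [← heq, ← integral_const_mul]
    refine integral_mono_of_nonneg (Filter.Eventually.of_forall fun q => ?_)
      (hFB.const_mul _) ?_
    · have h1 : 0 ≤ p0 (Aᵀ * A) q := Real.sqrt_nonneg _
      have h2 : 0 ≤ hrel (Aᵀ * A) p q := Real.sqrt_nonneg _
      simp only [Pi.zero_apply]
      positivity
    · filter_upwards [compl_mem_ae_iff.2 (measure_singleton p)] with q hq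
      exact integrand_le_profile hb0 hK hbound hA hZ hq
  have hpow : |A.det| * |B.det|⁻¹ = Z ^ (-(3 : ℝ) / 2) := by
    have e : Real.sqrt Z ^ 3 = Z ^ ((3 : ℝ) / 2) := by
      rw [Real.sqrt_eq_rpow, ← Real.rpow_natCast, ← Real.rpow_mul hZ0.le]; norm_num
    rw [hBdet, abs_mul, mul_inv, e, abs_of_pos (Real.rpow_pos_of_pos hZ0 _), neg_div,
      Real.rpow_neg hZ0.le]
    field_simp [abs_ne_zero.2 hA]
  rw [hsqrt]
  calc _ ≤ |A.det| * (2 ^ b * K * Z ^ (b / 2) * p0 (Aᵀ * A) p ^ (-(b / 2)) *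
        (|B.det|⁻¹ * I)) := by gcongr
    _ = 2 ^ b * K * I * (Z ^ (-(3 : ℝ) / 2) * Z ^ (b / 2)) * p0 (Aᵀ * A) p ^ (-(b / 2)) := by
        rw [← hpow]; ring
    _ = 2 ^ b * K * I * Z ^ (-(3 : ℝ) / 2 + b / 2) * p0 (Aᵀ * A) p ^ (-(b / 2)) := by
        rw [Real.rpow_add hZ0]
    _ ≤ _ := by gcongr; linarith
end
end

section
/- Let c₁ ≥ 1, Z > 0, and let G = (g^{ab}) be a symmetric positive definite real 3×3 matrix satisfying (1/c₁)|p|² ≤ Z² g^{ab}p_a p_b ≤ c₁|p|² for all p ∈ ℝ³. Then there is a constant C depending only on c₁ such that: (i) max_{a,b}|g^{ab}| ≤ C Z^{−2}; (ii) Z⁶ det G ≥ 1/C; (iii) there exists a lower-triangular orthonormal frame E for G with max_{i,a}|eⁱ_a| ≤ C Z. If moreover K = (k^{ab}) is a symmetric matrix with max_{a,b}|k^{ab}| ≤ c₁ Z^{−2}, H ≥ γ > 0 and F ≤ η²/4 for some η ∈ [0,1), then (1/C')|p|² ≤ Z² k^{ab}p_a p_b ≤ C'|p|² for all p, where C' depends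 only on c₁, γ, η. -/
open Matrix Real

noncomputable section

/-- The quadratic form `k^{ab} p_a p_b`. -/
def quadK (K : Mat3) (p : V3) : ℝ := p ⬝ᵥ K *ᵥ p

/-- Squared Euclidean norm `|p|²`. -/
def enorm2 (p : V3) : ℝ := ∑ i, p i ^ 2

/-- The Hubble scalar `H = (1/3) g_{ab} k^{ab}`. -/
def Hub (G K : Mat3) : ℝ := (1 / 3) * ∑ a, ∑ b, G⁻¹ a b * K a b

/-- The shear `σ^{ab} = k^{ab} − H g^{ab}`. -/
def shearUp (G K : Mat3) : Mat3 := K - Hub G K • G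

/-- `σ_{ab} σ^{ab}`. -/
def shearSq (G K : Mat3) : ℝ :=
  ∑ a, ∑ b, (G⁻¹ * shearUp G K * G⁻¹) a b * shearUp G K a b

/-- The shear variable `F = σ_{ab}σ^{ab}/(4H²)`. -/
def Fvar (G K : Mat3) : ℝ := shearSq G K / (4 * Hub G K ^ 2)

/-- A positive definite matrix has a lower-triangular orthonormal frame. -/
theorem exists_lowerTriangular_frame {G : Mat3} (hG : G.PosDef) :
    ∃ E : Mat3, (∀ i j : Fin 3, i < j → E i j = 0) ∧ E * G * Eᵀ = 1 := by
  set L : Mat3 := LDL.lowerInv hG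
  have hL : LDL.diag hG = L * G * Lᵀ := by
    rw [← conjTranspose_eq_transpose_of_trivial]
    exact LDL.diag_eq_lowerInv_conj hG
  have hunit : IsUnit L := by
    have : Invertible L := LDL.invertibleLowerInv hG
    exact isUnit_of_invertible L
  have hpos : ∀ i, 0 < LDL.diagEntries hG i := by
    rw [← posDef_diagonal_iff]
    change (LDL.diag hG).PosDef
    rw [LDL.diag_eq_lowerInv_conj hG]
    exact hG.mul_mul_conjTranspose_same (vecMul_injective_of_isUnit hunit)
  refine ⟨diagonal (fun i => (√(LDL.diagEntries hG i))⁻¹) * L, fun i j hij => ?_, ?_⟩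
  · have h : L i j = 0 := LDL.lowerInv_triangular hG hij
    rw [diagonal_mul, h, mul_zero]
  · rw [transpose_mul, diagonal_transpose]
    calc _ = diagonal (fun i => (√(LDL.diagEntries hG i))⁻¹) * (L * G * Lᵀ) *
          diagonal (fun i => (√(LDL.diagEntries hG i))⁻¹) := by simp only [Matrix.mul_assoc]
      _ = 1 := by
        rw [← hL, LDL.diag, diagonal_mul_diagonal, diagonal_mul_diagonal, ← diagonal_one]
        congr 1
        ext i
        have h := Real.sqrt_pos.2 (hpos i)
        have h2 := Real.mul_self_sqrt (hpos i).le
        field_simp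
        nlinarith

/-- Each entry of an orthonormal frame is controlled by the lower bound on the metric. -/
theorem frame_entry_sq_le {c Z : ℝ} (hc : 0 < c) {G E : Mat3}
    (hb : ∀ p : V3, (1 / c) * enorm2 p ≤ Z ^ 2 * quadG G p) (hE : E * G * Eᵀ = 1)
    (i a : Fin 3) : E i a ^ 2 ≤ c * Z ^ 2 := by
  have h1 : quadG G (E i) = 1 := by
    have h := congrFun (congrFun hE i) i
    rwa [mul_mul_apply, one_apply_eq] at h
  have h2 := hb (E i)
  rw [h1, one_div, inv_mul_le_iff₀ hc, mul_one] at h2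
  exact (Finset.single_le_sum (f := fun j => E i j ^ 2) (fun _ _ => sq_nonneg _)
    (Finset.mem_univ a)).trans h2

/-- A symmetric matrix whose form lies between `0` and `c|p|²` has entries at most `c`. -/
theorem abs_entry_le_of_quad {c : ℝ} {G : Mat3} (hs : G.IsSymm)
    (h0 : ∀ p : V3, 0 ≤ quadG G p) (hc : ∀ p : V3, quadG G p ≤ c * enorm2 p)
    (a b : Fin 3) : |G a b| ≤ c := by
  have hquad : ∀ s : ℝ, quadG G (Pi.single a 1 + s • Pi.single b 1) =
      G a a + 2 * s * G a b + s ^ 2 * G b b := by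
    intro s
    simp only [quadG, mulVec_add, mulVec_smul, add_dotProduct, dotProduct_add, smul_dotProduct,
      dotProduct_smul, mulVec_single_one, single_one_dotProduct, col_apply, smul_eq_mul]
    rw [hs.apply a b]
    ring
  have hdiag : ∀ i : Fin 3, G i i ≤ c := by
    intro i
    have h := hc (Pi.single i 1)
    simpa [quadG, enorm2, Pi.single_apply, ite_pow] using h
  have h1 := h0 (Pi.single a 1 + (1 : ℝ) • Pi.single b 1)
  have h2 := h0 (Pi.single a 1 + (-1 : ℝ) • Pi.single b 1)
  rw [hquad] at h1 h2
  have ha := hdiag a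
  have hb := hdiag b
  rw [abs_le]
  constructor <;> nlinarith

/-- The quadratic form of a matrix is bounded by its Frobenius norm. -/
theorem sq_dotProduct_mulVec_le (S : Mat3) (q : V3) :
    (q ⬝ᵥ S *ᵥ q) ^ 2 ≤ (∑ i, ∑ j, S i j ^ 2) * enorm2 q ^ 2 := by
  have h1 : (q ⬝ᵥ S *ᵥ q) ^ 2 ≤ enorm2 q * ∑ i, (S *ᵥ q) i ^ 2 :=
    Finset.sum_mul_sq_le_sq_mul_sq _ _ _
  have h2 : ∑ i, (S *ᵥ q) i ^ 2 ≤ ∑ i, (∑ j, S i j ^ 2) * enorm2 q :=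
    Finset.sum_le_sum fun i _ => by
      simpa only [mulVec, dotProduct, enorm2] using
        Finset.sum_mul_sq_le_sq_mul_sq Finset.univ (S i) q
  have h0 : 0 ≤ enorm2 q := Finset.sum_nonneg fun _ _ => sq_nonneg _
  rw [← Finset.sum_mul] at h2
  nlinarith [mul_le_mul_of_nonneg_left h2 h0]

theorem inv_eq_transpose_mul_of_frame {G E : Mat3} (hE : E * G * Eᵀ = 1) :
    G⁻¹ = Eᵀ * E := by
  have h : Eᵀ * (E * G) = 1 := mul_eq_one_comm.1 hE
  exact inv_eq_left_inv (by rw [Matrix.mul_assoc, h])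

/-- In an orthonormal frame `σ_{ab}σ^{ab}` is the squared Frobenius norm of the shear. -/
theorem shearSq_eq_frame {G K E : Mat3} (hG : G.IsSymm) (hK : K.IsSymm)
    (hE : E * G * Eᵀ = 1) :
    shearSq G K = ∑ i, ∑ j, (E * shearUp G K * Eᵀ) i j ^ 2 := by
  have hs : (shearUp G K)ᵀ = shearUp G K := hK.sub (hG.smul _)
  have htr : ∀ A B : Mat3, ∑ a, ∑ b, A a b * B a b = (A * Bᵀ).trace := fun A B => by
    simp [trace, mul_apply]
  simp only [shearSq, sq]
  rw [htr, htr, inv_eq_transpose_mul_of_frame hE]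
  simp only [transpose_mul, transpose_transpose, hs]
  rw [Matrix.mul_assoc Eᵀ E, Matrix.mul_assoc Eᵀ, Matrix.mul_assoc Eᵀ, trace_mul_comm]
  simp only [Matrix.mul_assoc]

/-- The lower bound `k ≥ (1 - η) H g` when the shear variable is at most `η²/4`. -/
theorem quadK_ge_of_Fvar_le {G K : Mat3} {η : ℝ} (hG : G.PosDef) (hK : K.IsSymm)
    (hη : 0 ≤ η) (hH : 0 < Hub G K) (hF : Fvar G K ≤ η ^ 2 / 4) (p : V3) :
    (1 - η) * Hub G K * quadG G p ≤ quadK K p := by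
  obtain ⟨E, -, hE⟩ := exists_lowerTriangular_frame hG
  have hGs : G.IsSymm := hG.isHermitian
  have hshear : shearSq G K ≤ (η * Hub G K) ^ 2 := by
    rw [Fvar, div_le_iff₀ (by positivity)] at hF
    linarith
  set q : V3 := E *ᵥ (G *ᵥ p) with hq
  have hp : Eᵀ *ᵥ q = p := by
    rw [hq, mulVec_mulVec, mulVec_mulVec, Matrix.mul_assoc, mul_eq_one_comm.1 hE, one_mulVec]
  have hconj : ∀ A : Mat3, q ⬝ᵥ (E * A * Eᵀ) *ᵥ q = p ⬝ᵥ A *ᵥ p := by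
    intro A
    rw [← mulVec_mulVec, hp, ← mulVec_mulVec, dotProduct_mulVec, ← mulVec_transpose, hp]
  have hqq : enorm2 q = quadG G p := by
    rw [quadG, ← hconj, hE, one_mulVec]
    simp [enorm2, dotProduct, sq]
  have hsplit : p ⬝ᵥ shearUp G K *ᵥ p = quadK K p - Hub G K * quadG G p := by
    simp [shearUp, quadK, quadG, sub_mulVec, smul_mulVec]
  have hle := sq_dotProduct_mulVec_le (E * shearUp G K * Eᵀ) q
  rw [hconj, ← shearSq_eq_frame hGs hK hE, hsplit] at hle
  have h0 : 0 ≤ enorm2 q := Finset.sum_nonneg fun _ _ => sq_nonneg _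
  have hsq : (quadK K p - Hub G K * quadG G p) ^ 2 ≤ (η * Hub G K * enorm2 q) ^ 2 := by
    rw [mul_pow _ (enorm2 q)]
    exact hle.trans (mul_le_mul_of_nonneg_right hshear (sq_nonneg _))
  have h := (abs_le.1 (abs_le_of_sq_le_sq hsq (by positivity))).1
  rw [hqq] at h
  linarith

/-- A matrix with entries bounded by `c` has quadratic form at most `3c|p|²`. -/
theorem quadK_le_of_abs_entry_le {c : ℝ} {K : Mat3} (hK : ∀ a b, |K a b| ≤ c) (p : V3) :
    quadK K p ≤ 3 * c * enorm2 p := by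
  have h : ∀ a b, p a * (K a b * p b) ≤ c * ((p a ^ 2 + p b ^ 2) / 2) := by
    intro a b
    have hab : |p a * p b| ≤ (p a ^ 2 + p b ^ 2) / 2 :=
      abs_le.2 ⟨by nlinarith [sq_nonneg (p a + p b)], by nlinarith [sq_nonneg (p a - p b)]⟩
    calc p a * (K a b * p b) = K a b * (p a * p b) := by ring
      _ ≤ |K a b| * |p a * p b| := (le_abs_self _).trans (abs_mul _ _).le
      _ ≤ _ := mul_le_mul (hK a b) hab (abs_nonneg _) ((abs_nonneg _).trans (hK a b))
  calc quadK K p = ∑ a, ∑ b, p a * (K a b * p b) := by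
        simp [quadK, dotProduct, mulVec, Finset.mul_sum]
    _ ≤ ∑ a, ∑ b, c * ((p a ^ 2 + p b ^ 2) / 2) :=
        Finset.sum_le_sum fun a _ => Finset.sum_le_sum fun b _ => h a b
    _ = _ := by
        simp only [enorm2, Fin.sum_univ_three]
        ring

/-- if `(1/c₁)|p|² ≤ Z²g^{ab}p_ap_b ≤ c₁|p|²`, then with a constant depending
only on `c₁`: (i) `max|g^{ab}| ≤ C Z⁻²`; (ii) `Z⁶ det G ≥ 1/C`; (iii) there is a
lower-triangular orthonormal frame `E` (`E G Eᵀ = 1`) with `max|eⁱ_a| ≤ C Z`; and if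
moreover `max|k^{ab}| ≤ c₁ Z⁻²`, `H ≥ γ > 0` and `F ≤ η²/4` with `η ∈ [0,1)`, then
`(1/C')|p|² ≤ Z²k^{ab}p_ap_b ≤ C'|p|²` with `C'` depending only on `c₁, γ, η`. -/
theorem stmt7 (c₁ : ℝ) (hc₁ : 1 ≤ c₁) :
    (∃ C > (0 : ℝ), ∀ Z : ℝ, 0 < Z → ∀ G : Mat3, G.PosDef →
      (∀ p : V3, (1 / c₁) * enorm2 p ≤ Z ^ 2 * quadG G p ∧
        Z ^ 2 * quadG G p ≤ c₁ * enorm2 p) →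
      (∀ a b : Fin 3, |G a b| ≤ C / Z ^ 2) ∧
      1 / C ≤ Z ^ 6 * G.det ∧
      (∃ E : Mat3, (∀ i j : Fin 3, i < j → E i j = 0) ∧ E * G * Eᵀ = 1 ∧
        ∀ i a : Fin 3, |E i a| ≤ C * Z)) ∧
    (∀ γ η : ℝ, 0 < γ → 0 ≤ η → η < 1 →
      ∃ C' > (0 : ℝ), ∀ Z : ℝ, 0 < Z → ∀ G K : Mat3, G.PosDef → K.IsSymm →
        (∀ p : V3, (1 / c₁) * enorm2 p ≤ Z ^ 2 * quadG G p ∧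
          Z ^ 2 * quadG G p ≤ c₁ * enorm2 p) →
        (∀ a b : Fin 3, |K a b| ≤ c₁ / Z ^ 2) →
        γ ≤ Hub G K → Fvar G K ≤ η ^ 2 / 4 →
        ∀ p : V3, (1 / C') * enorm2 p ≤ Z ^ 2 * quadK K p ∧
          Z ^ 2 * quadK K p ≤ C' * enorm2 p) := by
  have hc0 : 0 < c₁ := by linarith
  have hpow : c₁ ≤ c₁ ^ 6 := le_self_pow₀ hc₁ (by norm_num)
  refine ⟨⟨c₁ ^ 6, by positivity, fun Z hZ G hG hb => ?_⟩, fun γ η hγ hη hη1 => ?_⟩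
  · obtain ⟨E, hlow, hE⟩ := exists_lowerTriangular_frame hG
    have hentry : ∀ i a, |E i a| ≤ c₁ * Z := fun i a =>
      abs_le_of_sq_le_sq (by
        have h := frame_entry_sq_le hc0 (fun p => (hb p).1) hE i a
        nlinarith [mul_le_mul_of_nonneg_right hc₁ (by positivity : 0 ≤ c₁ * Z ^ 2)])
        (by positivity)
    refine ⟨fun a b => ?_, ?_, E, hlow, hE, fun i a => (hentry i a).trans (by gcongr)⟩
    · refine le_trans (abs_entry_le_of_quad hG.isHermitian (c := c₁ / Z ^ 2) (fun p => ?_)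
        (fun p => ?_) a b) (by gcongr)
      · simpa [quadG] using hG.posSemidef.dotProduct_mulVec_nonneg p
      · rw [div_mul_eq_mul_div, le_div_iff₀ (by positivity), mul_comm]
        exact (hb p).2
    · have hdet : E.det ^ 2 * G.det = 1 := by
        have h := congrArg det hE
        rw [det_mul, det_mul, det_transpose, det_one] at h
        linarith
      have hEdet : |E.det| ≤ (c₁ * Z) ^ 3 := by
        have htri : E.IsLowerTriangular := fun i j hij => hlow i j hij
        rw [det_of_isLowerTriangular E htri, Finset.abs_prod]
        exact (Finset.prod_le_prod (fun _ _ => abs_nonneg _) fun i _ => hentry i i).trans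
          (by simp)
      have hsq : E.det ^ 2 ≤ c₁ ^ 6 * Z ^ 6 := by
        rw [← sq_abs]
        calc |E.det| ^ 2 ≤ ((c₁ * Z) ^ 3) ^ 2 := by gcongr
          _ = _ := by ring
      rw [one_div, inv_le_iff_one_le_mul₀' (by positivity), ← hdet, ← mul_assoc]
      exact mul_le_mul_of_nonneg_right hsq hG.det_pos.le
  · have h1η : 0 < 1 - η := by linarith
    refine ⟨c₁ / (γ * (1 - η)) + 3 * c₁, by positivity,
      fun Z hZ G K hG hK hb hKb hH hF p => ⟨?_, ?_⟩⟩
    · have h0 : 0 ≤ enorm2 p := Finset.sum_nonneg fun _ _ => sq_nonneg _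
      have hZG : 0 ≤ Z ^ 2 * quadG G p := le_trans (by positivity) (hb p).1
      calc 1 / (c₁ / (γ * (1 - η)) + 3 * c₁) * enorm2 p
          ≤ 1 / (c₁ / (γ * (1 - η))) * enorm2 p := by
            gcongr
            linarith
        _ = (1 - η) * γ * (1 / c₁ * enorm2 p) := by field_simp
        _ ≤ (1 - η) * γ * (Z ^ 2 * quadG G p) :=
            mul_le_mul_of_nonneg_left (hb p).1 (by positivity)
        _ ≤ (1 - η) * Hub G K * (Z ^ 2 * quadG G p) := by gcongr
        _ = Z ^ 2 * ((1 - η) * Hub G K * quadG G p) := by ring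
        _ ≤ Z ^ 2 * quadK K p := by
            gcongr
            exact quadK_ge_of_Fvar_le hG hK hη (hγ.trans_le hH) hF p
    · have h0 : 0 ≤ enorm2 p := Finset.sum_nonneg fun _ _ => sq_nonneg _
      calc Z ^ 2 * quadK K p ≤ Z ^ 2 * (3 * (c₁ / Z ^ 2) * enorm2 p) := by
            gcongr
            exact quadK_le_of_abs_entry_le hKb p
        _ = 3 * c₁ * enorm2 p := by field_simp
        _ ≤ _ := by
            gcongr
            have : 0 < c₁ / (γ * (1 - η)) := by positivity
            linarith
end
end
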